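/- Let q = r^2 with r an odd prime power. Suppose q − 1 = e_1 f_1 = e_2 f_2, there exists an integer l ≥ 2 with e_1 ≡ 2^l (mod 2^{l+1}) and 2^l | e_2, and that 2e_2 | e_1(r−1) and e_1 | e_2(r+1). Let s, t be integers with 1 ≤ s ≤ D_1, 1 ≤ t ≤ D_2 and 4 | (s−1)(r+1), and set n_1 = s·f_1 + t·f_2. If n_1 is even, then there exists an MDS self-dual code over F_q of length n_1, i.e., a linear code C ⊆ F_q^{n_1} with C = C⊥, dim C = n_1/2, and minimum Hamming distance n_1/2 + 1. -/

import Mathlib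

/-- The Euclidean dual of a linear code `C ⊆ F^n`. -/
def dualCode {F : Type*} [Field F] {n : ℕ} (C : Submodule F (Fin n → F)) :
    Submodule F (Fin n → F) where
  carrier := {x | ∀ c ∈ C, ∑ i, x i * c i = 0}
  add_mem' := by
    intro a b ha hb c hc
    simp only [Set.mem_setOf_eq] at ha hb ⊢
    simp [Pi.add_apply, add_mul, Finset.sum_add_distrib, ha c hc, hb c hc]
  zero_mem' := by intro c hc; simp
  smul_mem' := by
    intro r a ha c hc
    simp only [Set.mem_setOf_eq] at ha ⊢
    simp [Pi.smul_apply, smul_eq_mul, mul_assoc, ← Finset.mul_sum, ha c hc]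

/-- `C` has minimum Hamming distance `d`. -/
def IsMinDist {F : Type*} [Field F] [DecidableEq F] {n : ℕ}
    (C : Submodule F (Fin n → F)) (d : ℕ) : Prop :=
  (∀ c ∈ C, c ≠ 0 → d ≤ hammingNorm c) ∧ ∃ c ∈ C, c ≠ 0 ∧ hammingNorm c = d

/-!
Let `E ⊆ F` have even cardinality. A generalized Reed–Solomon code on the points of `E` whose
dimension is half its length is MDS, and by Lagrange interpolation it is self-dual when its column
multipliers `v a` satisfy `v a ^ 2 * ∏ b ∈ E \ {a}, (a - b) = 1`. Such multipliers exist as soon as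
all these products are squares in `F`.

Put `g = gcd e₁ e₂` and `dᵢ = eᵢ / g`. Choose `s` roots `x` of `x ^ d₁ = 1`, forming `S`, and `t`
roots `y` of `y ^ d₂ = -1`, forming `T`, and let `E` consist of the `a` with `a ^ f₁ ∈ S` or
`a ^ f₂ ∈ T`. As `d₁ * f₁ = d₂ * f₂ = (q - 1) / g`, the two halves are distinguished by the value
`±1` of `a ^ ((q - 1) / g)`, and since `4 ∣ g` every point of `E` is a square. Up to squares, the
products over `E` reduce to products of differences of elements of `S`, `T`, `a ^ f₁` and `a ^ f₂`.

These differences fall into two kinds. Since `2 * d₂ ∣ r - 1`, the elements `y ∈ T` and `a ^ f₂` lie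
in the subfield with `r` elements, all of which are squares in `F`. Since `d₁` is odd and divides
`r + 1`, it divides `h = (r + 1) / 2`, and `S` consists of elements `x` of norm `x ^ (r + 1) = 1`.
For distinct `u`, `w` of norm one, `(u - w) ^ (r - 1) = -1 / (u * w)`, so the quadratic character
`(u - w) ^ ((r - 1) * h)` is `(-1) ^ h` for `u, w ∈ S`, which is harmless because `(s - 1) * h` is
even, and it is `1` for `u = a ^ f₁`, `a ^ f₂ ∈ T`, `w ∈ S`, because then `u ^ h = (-1) ^ h`.
-/

open Polynomial

theorem degree_mul_lt_of_mem_degreeLT {R : Type*} [Semiring R] [NoZeroDivisors R] {f g : R[X]}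
    {k l : ℕ} (hf : f ∈ degreeLT R k) (hg : g ∈ degreeLT R l) :
    (f * g).degree < ((k + l - 1 : ℕ) : WithBot ℕ) := by
  rcases eq_or_ne f 0 with rfl | hf0
  · simp
  rcases eq_or_ne g 0 with rfl | hg0
  · simp
  rw [mem_degreeLT, ← natDegree_lt_iff_degree_lt ‹_›] at hf hg
  rw [← natDegree_lt_iff_degree_lt (mul_ne_zero hf0 hg0), natDegree_mul hf0 hg0]
  omega

section GRSCode

variable {F : Type*} [Field F] {n : ℕ}

/-- Evaluation of polynomials at the points `a i`, scaled by the column multipliers `v i`. -/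
noncomputable def grsEval (a v : Fin n → F) : F[X] →ₗ[F] Fin n → F :=
  LinearMap.pi fun i => v i • leval (a i)

/-- The generalized Reed–Solomon code of dimension `k` with evaluation points `a` and column
multipliers `v`; it is a genuine one when `a` is injective and no `v i` vanishes. -/
noncomputable def grsCode (a v : Fin n → F) (k : ℕ) : Submodule F (Fin n → F) :=
  (degreeLT F k).map (grsEval a v)

@[simp]
theorem grsEval_apply (a v : Fin n → F) (f : F[X]) (i : Fin n) :
    grsEval a v f i = v i * f.eval (a i) := rfl

theorem dualCode_eq_orthogonal (C : Submodule F (Fin n → F)) :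
    dualCode C = (Matrix.toBilin' (1 : Matrix (Fin n) (Fin n) F)).orthogonal C := by
  ext x
  rw [LinearMap.BilinForm.mem_orthogonal_iff]
  refine forall₂_congr fun c _ => ?_
  simp [Matrix.toBilin'_apply', dotProduct, mul_comm]

theorem finrank_dualCode (C : Submodule F (Fin n → F)) :
    Module.finrank F (dualCode C) = n - Module.finrank F C := by
  have hB : (Matrix.toBilin' (1 : Matrix (Fin n) (Fin n) F)).Nondegenerate :=
    LinearMap.BilinForm.nondegenerate_toBilin'_of_det_ne_zero' _ (by simp)
  rw [dualCode_eq_orthogonal, LinearMap.BilinForm.finrank_orthogonal hB, Module.finrank_fin_fun]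

variable {a v w : Fin n → F} {k l : ℕ}

theorem le_natDegree_add_hammingNorm_grsEval [DecidableEq F] (ha : Function.Injective a)
    (hv : ∀ i, v i ≠ 0) {f : F[X]} (hf : f ≠ 0) :
    n ≤ f.natDegree + hammingNorm (grsEval a v f) := by
  have hzeros : (Finset.univ.filter fun i => grsEval a v f i = 0).card ≤ f.natDegree := by
    rw [← Finset.card_image_of_injective _ ha]
    refine card_le_degree_of_subset_roots fun x hx => ?_
    rw [Finset.mem_val] at hx
    obtain ⟨i, hi, rfl⟩ := Finset.mem_image.1 hx
    simpa [hf, hv] using hi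
  calc n = Fintype.card (Fin n) := (Fintype.card_fin n).symm
    _ = (Finset.univ.filter fun i => grsEval a v f i = 0).card
          + hammingNorm (grsEval a v f) :=
      (Finset.card_filter_add_card_filter_not _).symm
    _ ≤ f.natDegree + hammingNorm (grsEval a v f) := by gcongr

theorem lt_add_hammingNorm_grsEval [DecidableEq F] (ha : Function.Injective a)
    (hv : ∀ i, v i ≠ 0) {f : F[X]} (hf : f ≠ 0) (hfk : f ∈ degreeLT F k) :
    n < k + hammingNorm (grsEval a v f) := by
  have hdeg := (natDegree_lt_iff_degree_lt hf).2 (mem_degreeLT.1 hfk)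
  have := le_natDegree_add_hammingNorm_grsEval ha hv hf
  omega

theorem finrank_grsCode (ha : Function.Injective a) (hv : ∀ i, v i ≠ 0) (hk : k ≤ n) :
    Module.finrank F (grsCode a v k) = k := by
  classical
  have hinj : Function.Injective ((grsEval a v).domRestrict (degreeLT F k)) := by
    rw [injective_iff_map_eq_zero]
    rintro ⟨f, hf⟩ h0
    by_contra hne
    have hlt := lt_add_hammingNorm_grsEval ha hv (fun h => hne (Subtype.ext h)) hf
    rw [show grsEval a v f = 0 from h0, hammingNorm_zero] at hlt
    omega
  rw [grsCode, ← LinearMap.range_domRestrict, LinearMap.finrank_range_of_inj hinj,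
    (degreeLTEquiv F k).finrank_eq, Module.finrank_fin_fun]

theorem isMinDist_grsCode [DecidableEq F] (ha : Function.Injective a) (hv : ∀ i, v i ≠ 0)
    (hk : 0 < k) (hkn : k ≤ n) : IsMinDist (grsCode a v k) (n - k + 1) := by
  refine ⟨?_, ?_⟩
  · rintro _ ⟨f, hf, rfl⟩ h0
    have := lt_add_hammingNorm_grsEval ha hv (fun h : f = 0 => h0 (by rw [h, map_zero])) hf
    omega
  · -- A polynomial with exactly `k - 1` roots among the evaluation points has minimum weight.
    obtain ⟨T, -, hT⟩ := Finset.exists_subset_card_eq (s := (Finset.univ : Finset (Fin n)))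
      (n := k - 1) (by simp only [Finset.card_univ, Fintype.card_fin]; omega)
    have hdeg : Lagrange.nodal T a ∈ degreeLT F k := by
      rw [mem_degreeLT, Lagrange.degree_nodal, hT]
      exact_mod_cast Nat.sub_lt hk one_pos
    have hlt := lt_add_hammingNorm_grsEval ha hv Lagrange.nodal_ne_zero hdeg
    have hle : hammingNorm (grsEval a v (Lagrange.nodal T a)) ≤ Tᶜ.card := by
      refine Finset.card_le_card fun i hi => Finset.mem_compl.2 fun hiT => ?_
      simp [Lagrange.eval_nodal_at_node hiT] at hi
    rw [Finset.card_compl, Fintype.card_fin, hT] at hle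
    refine ⟨_, ⟨_, hdeg, rfl⟩, hammingNorm_pos_iff.1 ?_, ?_⟩ <;> omega

theorem dualCode_grsCode (ha : Function.Injective a)
    (hvw : ∀ i, v i * w i * ∏ j ∈ Finset.univ.erase i, (a i - a j) = 1) (hkl : k + l = n) :
    dualCode (grsCode a v k) = grsCode a w l := by
  have hvw0 : ∀ i, v i * w i ≠ 0 := fun i => left_ne_zero_of_mul_eq_one (hvw i)
  have hle : grsCode a w l ≤ dualCode (grsCode a v k) := by
    rintro _ ⟨g, hg, rfl⟩ _ ⟨f, hf, rfl⟩
    -- By Lagrange interpolation the inner product is the coefficient of `X ^ (n - 1)` in `g * f`.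
    have hdeg := degree_mul_lt_of_mem_degreeLT hg hf
    rw [add_comm, hkl] at hdeg
    have hcoeff := Lagrange.coeff_eq_sum (s := Finset.univ) (v := a) ha.injOn (P := g * f) (by
      rw [Finset.card_univ, Fintype.card_fin]
      exact hdeg.trans_le (by exact_mod_cast Nat.sub_le n 1))
    rw [Finset.card_univ, Fintype.card_fin, coeff_eq_zero_of_degree_lt hdeg] at hcoeff
    rw [hcoeff]
    refine Finset.sum_congr rfl fun i _ => ?_
    rw [eq_div_iff (right_ne_zero_of_mul_eq_one (hvw i)), eval_mul, grsEval_apply, grsEval_apply]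
    linear_combination g.eval (a i) * f.eval (a i) * hvw i
  refine (Submodule.eq_of_le_of_finrank_eq hle ?_).symm
  rw [finrank_dualCode, finrank_grsCode ha (fun i => left_ne_zero_of_mul (hvw0 i)) (by omega),
    finrank_grsCode ha (fun i => right_ne_zero_of_mul (hvw0 i)) (by omega)]
  omega

/-- Existence of an MDS self-dual code of length `n` over `F`. -/
def HasMDSSelfDualCode (F : Type*) [Field F] [DecidableEq F] (n : ℕ) : Prop :=
  ∃ C : Submodule F (Fin n → F),
    dualCode C = C ∧ Module.finrank F C = n / 2 ∧ IsMinDist C (n / 2 + 1)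

theorem hasMDSSelfDualCode_of_isSquare_prod_sub [DecidableEq F] {E : Finset F}
    (hE : E.Nonempty) (heven : Even E.card)
    (hsq : ∀ a ∈ E, IsSquare (∏ b ∈ E.erase a, (a - b))) :
    HasMDSSelfDualCode F E.card := by
  let a : Fin E.card ↪ F := E.equivFin.symm.toEmbedding.trans (Function.Embedding.subtype _)
  have hmap : Finset.univ.map a = E := by
    rw [← Finset.map_map, Finset.map_univ_equiv]
    exact Finset.attach_map_val
  have hprod (i) : ∏ b ∈ E.erase (a i), (a i - b) = ∏ j ∈ Finset.univ.erase i, (a i - a j) := by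
    rw [← Finset.prod_map _ a fun b => a i - b, Finset.map_erase, hmap]
  have hroot (i) : ∃ u, ∏ j ∈ Finset.univ.erase i, (a i - a j) = u * u :=
    hprod i ▸ hsq (a i) (E.equivFin.symm i).2
  choose u hu using hroot
  have hu0 (i) : u i ≠ 0 := by
    have : u i * u i ≠ 0 := hu i ▸ Finset.prod_ne_zero_iff.2 fun j hj =>
      sub_ne_zero.2 (a.injective.ne (Finset.ne_of_mem_erase hj).symm)
    exact left_ne_zero_of_mul this
  have hhalf : E.card / 2 + E.card / 2 = E.card := by
    rw [← two_mul, Nat.two_mul_div_two_of_even heven]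
  have hpos := hE.card_pos
  refine ⟨grsCode a (fun i => (u i)⁻¹) (E.card / 2),
    dualCode_grsCode a.injective (fun i => ?_) hhalf,
    finrank_grsCode a.injective (fun i => inv_ne_zero (hu0 i)) (by omega), ?_⟩
  · rw [hu]
    field_simp [hu0 i]
  · convert isMinDist_grsCode a.injective (fun i => inv_ne_zero (hu0 i)) (k := E.card / 2) _ _
      using 1 <;> omega

end GRSCode

theorem eval_derivative_nodal_id {R : Type*} [CommRing R] [DecidableEq R] {E : Finset R} {c : R}
    (hc : c ∈ E) :
    (derivative (Lagrange.nodal E id)).eval c = ∏ b ∈ E.erase c, (c - b) := by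
  simpa [Lagrange.eval_nodal] using Lagrange.eval_nodal_derivative_eval_node_eq (v := id) hc

section PowPreimage

variable {F : Type*} [Field F] [Fintype F] {e f : ℕ}

theorem nodal_nthRootsFinset (hef : e * f = Fintype.card F - 1) {x : F} (hx : x ^ e = 1) :
    Lagrange.nodal (nthRootsFinset f x) id = X ^ f - C x := by
  classical
  have hcard := Fintype.one_lt_card (α := F)
  have hf : 0 < f := Nat.pos_of_ne_zero (by rintro rfl; omega)
  have hdvd : X ^ f - C x ∣ (X ^ Fintype.card F - X : F[X]) := by
    have h : X ^ f - C x ∣ (X ^ f) ^ e - C x ^ e := sub_dvd_pow_sub_pow _ _ e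
    rw [← pow_mul, mul_comm, hef, ← C_pow, hx, C_1] at h
    refine h.trans ⟨X, ?_⟩
    rw [sub_mul, one_mul, pow_sub_one_mul (by omega)]
  have hne := FiniteField.X_pow_card_sub_X_ne_zero F hcard
  have hsplits : (X ^ Fintype.card F - X : F[X]).Splits := by
    rw [splits_iff_card_roots, FiniteField.roots_X_pow_card_sub_X,
      FiniteField.X_pow_card_sub_X_natDegree_eq F hcard, Finset.card_val, Finset.card_univ]
  have hnodup : (nthRoots f x).Nodup := by
    refine Multiset.nodup_of_le (roots.le_of_dvd hne hdvd) ?_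
    rw [FiniteField.roots_X_pow_card_sub_X]
    exact Finset.univ.nodup
  rw [(hsplits.of_dvd hne hdvd).eq_prod_roots_of_monic (monic_X_pow_sub_C x hf.ne'), ← nthRoots,
    Lagrange.nodal, Finset.prod, nthRootsFinset_def, Multiset.toFinset_val, hnodup.dedup]
  rfl

theorem card_nthRootsFinset_of_pow_eq_one (hef : e * f = Fintype.card F - 1) {x : F}
    (hx : x ^ e = 1) : (nthRootsFinset f x).card = f := by
  rw [← Lagrange.natDegree_nodal (v := id), nodal_nthRootsFinset hef hx, natDegree_X_pow_sub_C]

variable [DecidableEq F]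

/-- The elements of `F` whose `f`-th power lies in `S`. For `S ⊆ Fˣ` this is a union of cosets of
the group of `f`-th roots of unity. -/
def powPreimage (f : ℕ) (S : Finset F) : Finset F :=
  {a | a ^ f ∈ S}

@[simp]
theorem mem_powPreimage {S : Finset F} {a : F} : a ∈ powPreimage f S ↔ a ^ f ∈ S := by
  simp [powPreimage]

variable {S : Finset F} (hef : e * f = Fintype.card F - 1) (hS : ∀ x ∈ S, x ^ e = 1)

include hef hS

theorem nodal_powPreimage :
    Lagrange.nodal (powPreimage f S) id = expand F f (Lagrange.nodal S id) := by
  have hf : 0 < f := Nat.pos_of_ne_zero (by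
    have := Fintype.one_lt_card (α := F)
    rintro rfl
    omega)
  have hfiber (x) (hx : x ∈ S) : {a ∈ powPreimage f S | a ^ f = x} = nthRootsFinset f x := by
    ext a
    simp only [Finset.mem_filter, mem_powPreimage, mem_nthRootsFinset hf]
    exact ⟨And.right, fun h => ⟨h ▸ hx, h⟩⟩
  calc Lagrange.nodal (powPreimage f S) id
      = ∏ x ∈ S, Lagrange.nodal {a ∈ powPreimage f S | a ^ f = x} id :=
        (Finset.prod_fiberwise_of_maps_to (fun _ => mem_powPreimage.1) _).symm
    _ = ∏ x ∈ S, (X ^ f - C x) := Finset.prod_congr rfl fun x hx => by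
        rw [hfiber x hx, nodal_nthRootsFinset hef (hS x hx)]
    _ = expand F f (Lagrange.nodal S id) := by simp [Lagrange.nodal]

theorem card_powPreimage : (powPreimage f S).card = S.card * f := by
  rw [← Lagrange.natDegree_nodal (v := id), nodal_powPreimage hef hS, natDegree_expand,
    Lagrange.natDegree_nodal]

theorem prod_sub_powPreimage (c : F) :
    ∏ b ∈ powPreimage f S, (c - b) = ∏ x ∈ S, (c ^ f - x) := by
  simpa [Lagrange.eval_nodal, expand_eval] using congrArg (eval c) (nodal_powPreimage hef hS)

theorem prod_erase_sub_powPreimage {a : F} (ha : a ^ f ∈ S) :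
    ∏ b ∈ (powPreimage f S).erase a, (a - b)
      = (∏ x ∈ S.erase (a ^ f), (a ^ f - x)) * (f * a ^ (f - 1)) := by
  rw [← eval_derivative_nodal_id (mem_powPreimage.2 ha), nodal_powPreimage hef hS,
    derivative_expand, eval_mul, expand_eval, eval_derivative_nodal_id ha]
  simp

end PowPreimage

theorem pow_eq_one_of_dvd {M : Type*} [Monoid M] {z : M} {d n : ℕ} (hd : d ∣ n) (hz : z ^ d = 1) :
    z ^ n = 1 := by
  obtain ⟨k, rfl⟩ := hd
  rw [pow_mul, hz, one_pow]

theorem pow_two_mul_eq_one_of_pow_eq_neg_one {M : Type*} [Monoid M] [HasDistribNeg M] {z : M}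
    {d : ℕ} (hz : z ^ d = -1) : z ^ (2 * d) = 1 := by
  rw [mul_comm, pow_mul, hz, neg_one_sq]

section Squares

variable {F : Type*} [Field F] [Fintype F] {r h : ℕ}

theorem exists_ringHom_eq_pow (hr : r ∣ Fintype.card F) : ∃ φ : F →+* F, ∀ x, φ x = x ^ r := by
  obtain ⟨p, hchar⟩ := CharP.exists F
  obtain ⟨m, hp, hcard⟩ := FiniteField.card F p
  have : Fact p.Prime := ⟨hp⟩
  obtain ⟨k, -, rfl⟩ := (Nat.dvd_prime_pow hp).1 (hcard ▸ hr)
  exact ⟨iterateFrobenius F p k, fun x => iterateFrobenius_def p k x⟩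

theorem sub_pow_of_dvd_card (hr : r ∣ Fintype.card F) (x y : F) :
    (x - y) ^ r = x ^ r - y ^ r := by
  obtain ⟨φ, hφ⟩ := exists_ringHom_eq_pow hr
  simp only [← hφ, map_sub]

theorem natCast_pow_of_dvd_card (hr : r ∣ Fintype.card F) (n : ℕ) : (n : F) ^ r = n := by
  obtain ⟨φ, hφ⟩ := exists_ringHom_eq_pow hr
  rw [← hφ, map_natCast]

theorem isSquare_of_pow_eq_one {m : ℕ} (hm : 2 * m ∣ Fintype.card F - 1) {z : F}
    (hz : z ^ m = 1) : IsSquare z := by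
  have hcard := Fintype.one_lt_card (α := F)
  by_cases hchar : ringChar F = 2
  · exact FiniteField.isSquare_of_char_two hchar z
  obtain ⟨k, hk⟩ := hm
  have hm0 : m ≠ 0 := by
    rintro rfl
    omega
  have hz0 : z ≠ 0 := by
    rintro rfl
    simp [hm0] at hz
  have hodd := FiniteField.odd_card_of_char_ne_two hchar
  have hhalf : Fintype.card F / 2 = m * k := by
    rw [mul_assoc] at hk
    omega
  rw [FiniteField.isSquare_iff hchar hz0, hhalf, pow_mul, hz, one_pow]

theorem isSquare_of_pow_eq_self (hF : Fintype.card F = r ^ 2) (hr : Odd r) {z : F}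
    (hz : z ^ r = z) : IsSquare z := by
  rcases eq_or_ne z 0 with rfl | hz0
  · exact IsSquare.zero
  refine isSquare_of_pow_eq_one (m := r - 1) ?_ (mul_right_cancel₀ hz0 ?_)
  · rw [hF, ← one_pow 2, Nat.sq_sub_sq, one_pow]
    exact mul_dvd_mul_right (hr.add_one).two_dvd _
  · rw [pow_sub_one_mul hr.pos.ne', hz, one_mul]

-- On elements of norm one `z ↦ z ^ r` is inversion, hence `(u - w) ^ (r - 1) = -1 / (u * w)`.
theorem sub_pow_pred_mul_mul_eq_neg_one (hr : r ∣ Fintype.card F) {u w : F} (hu : u ^ (r + 1) = 1)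
    (hw : w ^ (r + 1) = 1) (huw : u ≠ w) : (u - w) ^ (r - 1) * (u * w) = -1 := by
  have hr0 : r ≠ 0 := ne_zero_of_dvd_ne_zero Fintype.card_ne_zero hr
  refine mul_right_cancel₀ (sub_ne_zero.2 huw) ?_
  calc (u - w) ^ (r - 1) * (u * w) * (u - w)
      = (u - w) ^ (r - 1) * (u - w) * (u * w) := by ring
    _ = (u ^ r - w ^ r) * (u * w) := by rw [pow_sub_one_mul hr0, sub_pow_of_dvd_card hr]
    _ = u ^ (r + 1) * w - w ^ (r + 1) * u := by ring
    _ = -1 * (u - w) := by rw [hu, hw]; ring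

theorem sub_pow_pred_mul_eq_neg_pow (hr : r ∣ Fintype.card F) (hrh : r + 1 = 2 * h) {u w : F}
    (hu : u ^ (r + 1) = 1) (hw : w ^ h = 1) (huw : u ≠ w) :
    (u - w) ^ ((r - 1) * h) = (-u) ^ h := by
  have hw' : w ^ (r + 1) = 1 := by rw [hrh, mul_comm, pow_mul, hw, one_pow]
  have hu' : u ^ h * u ^ h = 1 := by rw [← pow_add, ← two_mul, ← hrh, hu]
  have hnorm := congrArg (· ^ h) (sub_pow_pred_mul_mul_eq_neg_one hr hu hw' huw)
  simp only [mul_pow, hw, mul_one, ← pow_mul] at hnorm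
  calc (u - w) ^ ((r - 1) * h) = (u - w) ^ ((r - 1) * h) * u ^ h * u ^ h := by
        rw [mul_assoc, hu', mul_one]
    _ = (-u) ^ h := by rw [hnorm, ← mul_pow, neg_one_mul]

theorem isSquare_of_pow_pred_mul_eq_one (hF : Fintype.card F = r ^ 2) (hrh : r + 1 = 2 * h) {z : F}
    (hz : z ^ ((r - 1) * h) = 1) : IsSquare z := by
  refine isSquare_of_pow_eq_one (Dvd.intro 1 ?_) hz
  rw [hF, ← one_pow 2, Nat.sq_sub_sq, one_pow, hrh]
  ring

theorem isSquare_sub_of_pow_eq_neg_one_pow (hF : Fintype.card F = r ^ 2) (hrh : r + 1 = 2 * h)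
    {u w : F} (hu : u ^ h = (-1) ^ h) (hw : w ^ h = 1) : IsSquare (u - w) := by
  rcases eq_or_ne u w with rfl | huw
  · simp
  have hu' : u ^ (r + 1) = 1 := by rw [hrh, mul_comm, pow_mul, hu, ← pow_mul]; simp
  refine isSquare_of_pow_pred_mul_eq_one hF hrh ?_
  rw [sub_pow_pred_mul_eq_neg_pow (hF ▸ dvd_pow_self r two_ne_zero) hrh hu' hw huw, neg_pow, hu,
    ← mul_pow]
  simp

theorem isSquare_prod_erase_sub_of_pow_eq_one [DecidableEq F] (hF : Fintype.card F = r ^ 2)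
    (hrh : r + 1 = 2 * h) {S : Finset F} (hS : ∀ x ∈ S, x ^ h = 1)
    (heven : Even ((S.card - 1) * h)) {u : F} (hu : u ∈ S) :
    IsSquare (∏ w ∈ S.erase u, (u - w)) := by
  have hu' : u ^ (r + 1) = 1 := by rw [hrh, mul_comm, pow_mul, hS u hu, one_pow]
  have hfactor (w) (hw : w ∈ S.erase u) : (u - w) ^ ((r - 1) * h) = (-1) ^ h := by
    obtain ⟨hne, hw⟩ := Finset.mem_erase.1 hw
    rw [sub_pow_pred_mul_eq_neg_pow (hF ▸ dvd_pow_self r two_ne_zero) hrh hu' (hS w hw) hne.symm,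
      neg_pow, hS u hu, mul_one]
  refine isSquare_of_pow_pred_mul_eq_one hF hrh ?_
  rw [← Finset.prod_pow, Finset.prod_congr rfl hfactor, Finset.prod_const,
    Finset.card_erase_of_mem hu, ← pow_mul, mul_comm, heven.neg_one_pow]

theorem isSquare_natCast (hF : Fintype.card F = r ^ 2) (hr : Odd r) (n : ℕ) : IsSquare (n : F) :=
  isSquare_of_pow_eq_self hF hr (natCast_pow_of_dvd_card (hF ▸ dvd_pow_self r two_ne_zero) n)

theorem isSquare_sub_of_pow_eq_one (hF : Fintype.card F = r ^ 2) (hr : Odd r) {d : ℕ}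
    (hd : d ∣ r - 1) {x y : F} (hx : x ^ d = 1) (hy : y ^ d = 1) : IsSquare (x - y) := by
  have hfix {z : F} (hz : z ^ d = 1) : z ^ r = z := by
    rw [← pow_sub_one_mul hr.pos.ne', pow_eq_one_of_dvd hd hz, one_mul]
  refine isSquare_of_pow_eq_self hF hr ?_
  rw [sub_pow_of_dvd_card (hF ▸ dvd_pow_self r two_ne_zero), hfix hx, hfix hy]

end Squares

section CosetUnion

variable {F : Type*} [Field F] [Fintype F] [DecidableEq F]
  {r h g d₁ d₂ f₁ f₂ : ℕ} {S T : Finset F}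

theorem disjoint_powPreimage (hdf : d₁ * f₁ = d₂ * f₂) {α β : F} (hαβ : α ≠ β)
    (hS : ∀ x ∈ S, x ^ d₁ = α) (hT : ∀ y ∈ T, y ^ d₂ = β) :
    Disjoint (powPreimage f₁ S) (powPreimage f₂ T) := by
  refine Finset.disjoint_left.2 fun a haS haT => hαβ ?_
  rw [← hS _ (mem_powPreimage.1 haS), ← hT _ (mem_powPreimage.1 haT), ← pow_mul, ← pow_mul,
    mul_comm, hdf, mul_comm]

theorem isSquare_prod_erase_powPreimage_union (hF : Fintype.card F = r ^ 2) (hr : Odd r)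
    {e₁ e₂ : ℕ} (hef₁ : e₁ * f₁ = Fintype.card F - 1) (hef₂ : e₂ * f₂ = Fintype.card F - 1)
    (hS : ∀ x ∈ S, x ^ e₁ = 1) (hT : ∀ y ∈ T, y ^ e₂ = 1)
    (hdisj : Disjoint (powPreimage f₁ S) (powPreimage f₂ T)) {a : F} (haS : a ^ f₁ ∈ S)
    (ha : IsSquare a) (hdS : IsSquare (∏ x ∈ S.erase (a ^ f₁), (a ^ f₁ - x)))
    (hdT : ∀ y ∈ T, IsSquare (a ^ f₂ - y)) :
    IsSquare (∏ b ∈ (powPreimage f₁ S ∪ powPreimage f₂ T).erase a, (a - b)) := by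
  have haT : a ∉ powPreimage f₂ T := Finset.disjoint_left.1 hdisj (mem_powPreimage.2 haS)
  rw [Finset.erase_union_distrib, Finset.erase_eq_of_notMem haT,
    Finset.prod_union (hdisj.mono_left (Finset.erase_subset _ _)),
    prod_erase_sub_powPreimage hef₁ hS haS, prod_sub_powPreimage hef₂ hT]
  exact (hdS.mul ((isSquare_natCast hF hr f₁).mul (ha.pow _))).mul (Finset.isSquare_prod _ hdT)

variable (hF : Fintype.card F = r ^ 2) (hrh : r + 1 = 2 * h)
  (hef : g * (d₁ * f₁) = Fintype.card F - 1) (hdf : d₁ * f₁ = d₂ * f₂)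
  (hd₁ : d₁ ∣ h) (hd₂ : 2 * d₂ ∣ r - 1) (hS : ∀ x ∈ S, x ^ d₁ = 1) (hT : ∀ y ∈ T, y ^ d₂ = -1)

include hF hrh hef hdf hd₁ hd₂ hS hT

theorem isSquare_prod_erase_powPreimage_union_left
    (hdisj : Disjoint (powPreimage f₁ S) (powPreimage f₂ T)) (hg : 2 ∣ g)
    (heven : Even ((S.card - 1) * h)) {a : F} (ha : a ^ f₁ ∈ S) :
    IsSquare (∏ b ∈ (powPreimage f₁ S ∪ powPreimage f₂ T).erase a, (a - b)) := by
  have hr : Odd r := by grind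
  have hm : a ^ (d₁ * f₁) = 1 := by rw [mul_comm, pow_mul, hS _ ha]
  have hT₂ (y) (hy : y ∈ T) : y ^ (2 * d₂) = 1 := pow_two_mul_eq_one_of_pow_eq_neg_one (hT y hy)
  have ha₂ : (a ^ f₂) ^ (2 * d₂) = 1 := by
    rw [← pow_mul, mul_left_comm, mul_comm f₂, ← hdf, mul_comm, pow_mul, hm, one_pow]
  refine isSquare_prod_erase_powPreimage_union hF hr (e₁ := g * d₁) (e₂ := g * d₂)
    (by rw [mul_assoc, hef]) (by rw [mul_assoc, ← hdf, hef])
    (fun x hx => pow_eq_one_of_dvd (dvd_mul_left _ _) (hS x hx))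
    (fun y hy => pow_eq_one_of_dvd (mul_dvd_mul_right hg _) (hT₂ y hy)) hdisj ha ?_ ?_ ?_
  · exact isSquare_of_pow_eq_one (hef ▸ mul_dvd_mul_right hg _) hm
  · exact isSquare_prod_erase_sub_of_pow_eq_one hF hrh
      (fun x hx => pow_eq_one_of_dvd hd₁ (hS x hx)) heven ha
  · exact fun y hy => isSquare_sub_of_pow_eq_one hF hr hd₂ ha₂ (hT₂ y hy)

theorem isSquare_prod_erase_powPreimage_union_right
    (hdisj : Disjoint (powPreimage f₁ S) (powPreimage f₂ T)) (hg : 4 ∣ g) (hodd : Odd d₁) {a : F}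
    (ha : a ^ f₂ ∈ T) :
    IsSquare (∏ b ∈ (powPreimage f₁ S ∪ powPreimage f₂ T).erase a, (a - b)) := by
  have hr : Odd r := by grind
  have hm : a ^ (d₁ * f₁) = -1 := by rw [hdf, mul_comm, pow_mul, hT _ ha]
  have hT₂ (y) (hy : y ∈ T) : y ^ (2 * d₂) = 1 := pow_two_mul_eq_one_of_pow_eq_neg_one (hT y hy)
  have ha₁ : (a ^ f₁) ^ h = (-1) ^ h := by
    obtain ⟨k, rfl⟩ := hd₁
    rw [← pow_mul, ← mul_assoc, mul_comm f₁, pow_mul, hm, pow_mul (-1), hodd.neg_one_pow]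
  rw [Finset.union_comm]
  refine isSquare_prod_erase_powPreimage_union hF hr (e₁ := g * d₂) (e₂ := g * d₁)
    (by rw [mul_assoc, ← hdf, hef]) (by rw [mul_assoc, hef])
    (fun y hy => pow_eq_one_of_dvd (mul_dvd_mul_right (by omega) _) (hT₂ y hy))
    (fun x hx => pow_eq_one_of_dvd (dvd_mul_left _ _) (hS x hx)) hdisj.symm ha ?_ ?_ ?_
  · refine isSquare_of_pow_eq_one (m := 2 * (d₁ * f₁)) ?_ ?_
    · rw [← mul_assoc, ← hef]
      exact mul_dvd_mul_right hg _
    · exact pow_two_mul_eq_one_of_pow_eq_neg_one hm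
  · exact Finset.isSquare_prod _ fun y hy => isSquare_sub_of_pow_eq_one hF hr hd₂ (hT₂ _ ha)
      (hT₂ y (Finset.mem_of_mem_erase hy))
  · exact fun x hx => isSquare_sub_of_pow_eq_neg_one_pow hF hrh ha₁
      (pow_eq_one_of_dvd hd₁ (hS x hx))

theorem hasMDSSelfDualCode_powPreimage_union (hg : 4 ∣ g) (hodd : Odd d₁) (hSne : S.Nonempty)
    (heven : Even ((S.card - 1) * h)) (hn : Even (S.card * f₁ + T.card * f₂)) :
    HasMDSSelfDualCode F (S.card * f₁ + T.card * f₂) := by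
  have hne : (1 : F) ≠ -1 := by
    refine (Ring.neg_one_ne_one_of_char_ne_two fun h2 => ?_).symm
    have hr : Odd (r ^ 2) := Odd.pow (by grind)
    rw [← hF, Nat.odd_iff, FiniteField.even_card_of_char_two h2] at hr
    omega
  have hdisj := disjoint_powPreimage hdf hne hS hT
  have hef₁ : g * d₁ * f₁ = Fintype.card F - 1 := by rw [mul_assoc, hef]
  have hef₂ : g * d₂ * f₂ = Fintype.card F - 1 := by rw [mul_assoc, ← hdf, hef]
  have hcardS := card_powPreimage hef₁ fun x hx => pow_eq_one_of_dvd (dvd_mul_left _ _) (hS x hx)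
  have hcardT := card_powPreimage hef₂ fun y hy =>
    pow_eq_one_of_dvd (mul_dvd_mul_right (by omega) _)
      (pow_two_mul_eq_one_of_pow_eq_neg_one (hT y hy))
  have hcard : (powPreimage f₁ S ∪ powPreimage f₂ T).card = S.card * f₁ + T.card * f₂ := by
    rw [Finset.card_union_of_disjoint hdisj, hcardS, hcardT]
  have hpos : 0 < S.card * f₁ + T.card * f₂ := by
    have hf₁ : f₁ ≠ 0 := by
      rintro rfl
      have := Fintype.one_lt_card (α := F)
      omega
    have := hSne.card_pos
    positivity
  rw [← hcard] at hn hpos ⊢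
  refine hasMDSSelfDualCode_of_isSquare_prod_sub (Finset.card_pos.1 hpos) hn fun a ha => ?_
  rcases Finset.mem_union.1 ha with ha | ha <;> rw [mem_powPreimage] at ha
  · exact isSquare_prod_erase_powPreimage_union_left hF hrh hef hdf hd₁ hd₂ hS hT hdisj
      (by omega) heven ha
  · exact isSquare_prod_erase_powPreimage_union_right hF hrh hef hdf hd₁ hd₂ hS hT hdisj
      hg hodd ha

end CosetUnion

theorem hasMDSSelfDualCode_of_card_eq_sq {F : Type*} [Field F] [Fintype F] [DecidableEq F]
    {r h g d₁ d₂ f₁ f₂ s t : ℕ} (hF : Fintype.card F = r ^ 2) (hrh : r + 1 = 2 * h)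
    (hef₁ : g * d₁ * f₁ = Fintype.card F - 1) (hef₂ : g * d₂ * f₂ = Fintype.card F - 1)
    (hg : 4 ∣ g) (hodd : Odd d₁) (hd₁ : d₁ ∣ h) (hd₂ : 2 * d₂ ∣ r - 1)
    (hs : 0 < s) (hsd : s ≤ d₁) (htd : t ≤ d₂) (heven : Even ((s - 1) * h))
    (hn : Even (s * f₁ + t * f₂)) : HasMDSSelfDualCode F (s * f₁ + t * f₂) := by
  have hpos : g * d₂ * f₂ ≠ 0 := by
    have := Fintype.one_lt_card (α := F)
    omega
  have hg0 : 0 < g := Nat.pos_of_ne_zero (left_ne_zero_of_mul (left_ne_zero_of_mul hpos))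
  have hd₂0 : 0 < d₂ := Nat.pos_of_ne_zero (right_ne_zero_of_mul (left_ne_zero_of_mul hpos))
  have hdf : d₁ * f₁ = d₂ * f₂ := by
    rw [mul_assoc] at hef₁ hef₂
    exact Nat.eq_of_mul_eq_mul_left hg0 (hef₁.trans hef₂.symm)
  have hcard₁ : (nthRootsFinset d₁ (1 : F)).card = d₁ :=
    card_nthRootsFinset_of_pow_eq_one (e := g * f₁) (by rw [← hef₁]; ring) (one_pow _)
  have hcard₂ : (nthRootsFinset d₂ (-1 : F)).card = d₂ :=
    card_nthRootsFinset_of_pow_eq_one (e := g * f₂) (by rw [← hef₂]; ring)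
      ((even_iff_two_dvd.2 (by omega)).mul_right _).neg_one_pow
  obtain ⟨S, hS, rfl⟩ := Finset.exists_subset_card_eq (hsd.trans hcard₁.ge)
  obtain ⟨T, hT, rfl⟩ := Finset.exists_subset_card_eq (htd.trans hcard₂.ge)
  exact hasMDSSelfDualCode_powPreimage_union hF hrh (by rw [← mul_assoc, hef₁]) hdf hd₁ hd₂
    (fun x hx => (mem_nthRootsFinset hodd.pos _).1 (hS hx))
    (fun y hy => (mem_nthRootsFinset hd₂0 _).1 (hT hy)) hg hodd (Finset.card_pos.1 hs) heven hn

theorem div_gcd_dvd_of_dvd_mul {a b c : ℕ} (hgcd : 0 < a.gcd b) (h : a ∣ b * c) :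
    a / a.gcd b ∣ c :=
  (Nat.div_dvd_iff_dvd_mul (Nat.gcd_dvd_left a b) hgcd).2 (Nat.dvd_gcd_mul_iff_dvd_mul.2 h)

theorem odd_div_two_pow_of_mod_eq {a l : ℕ} (h : a % 2 ^ (l + 1) = 2 ^ l) : Odd (a / 2 ^ l) := by
  rw [Nat.odd_iff, ← Nat.mod_mul_right_div_self, ← pow_succ, h, Nat.div_self (by positivity)]

/-- Theorem 3.2(1): if `n₁ = s·f₁ + t·f₂` is even, there is a `q`-ary MDS self-dual code
of length `n₁`, where `q = r²`. -/
theorem mds_self_dual_of_even_length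
    (r e1 f1 e2 f2 s t l : ℕ)
    (hr_odd : Odd r) (hr_pp : IsPrimePow r)
    (hq1 : r ^ 2 - 1 = e1 * f1) (hq2 : r ^ 2 - 1 = e2 * f2)
    (hl : 2 ≤ l) (he1 : e1 % 2 ^ (l + 1) = 2 ^ l) (he2 : 2 ^ l ∣ e2)
    (hdvd1 : 2 * e2 ∣ e1 * (r - 1)) (hdvd2 : e1 ∣ e2 * (r + 1))
    (hs1 : 1 ≤ s) (hs2 : s ≤ e1 / Nat.gcd e1 e2)
    (ht1 : 1 ≤ t) (ht2 : t ≤ e2 / Nat.gcd e1 e2)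
    (h4 : 4 ∣ (s - 1) * (r + 1))
    (hn1 : Even (s * f1 + t * f2))
    (F : Type*) [Field F] [Fintype F] [DecidableEq F]
    (hF : Fintype.card F = r ^ 2) :
    ∃ C : Submodule F (Fin (s * f1 + t * f2) → F),
      dualCode C = C ∧
      Module.finrank F C = (s * f1 + t * f2) / 2 ∧
      IsMinDist C ((s * f1 + t * f2) / 2 + 1) := by
  obtain ⟨h, hrh⟩ := hr_odd.add_one.two_dvd
  obtain ⟨j, hrj⟩ : 2 ∣ r - 1 := hr_odd.tsub_odd odd_one |>.two_dvd
  have hle1 : 2 ^ l ∣ e1 := (Nat.dvd_mod_iff (pow_dvd_pow 2 l.le_succ)).1 he1.symm.dvd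
  have hgcd : 2 ^ l ∣ e1.gcd e2 := Nat.dvd_gcd hle1 he2
  have hpos : 0 < e1.gcd e2 := (Nat.div_pos_iff.1 (hs1.trans hs2)).1
  have hodd : Odd (e1 / e1.gcd e2) := (odd_div_two_pow_of_mod_eq he1).of_dvd_nat
    (Nat.div_dvd_div_left (Nat.gcd_dvd_left _ _) hgcd)
  have hd₁ : e1 / e1.gcd e2 ∣ h :=
    hodd.coprime_two_right.dvd_of_dvd_mul_left (hrh ▸ div_gcd_dvd_of_dvd_mul hpos hdvd2)
  have hd₂ : 2 * (e2 / e1.gcd e2) ∣ r - 1 := by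
    rw [hrj, mul_left_comm] at hdvd1
    rw [hrj, Nat.gcd_comm]
    exact mul_dvd_mul_left 2
      (div_gcd_dvd_of_dvd_mul (e1.gcd_comm e2 ▸ hpos) (Nat.dvd_of_mul_dvd_mul_left two_pos hdvd1))
  have heven : Even ((s - 1) * h) := by
    rw [hrh, mul_left_comm] at h4
    exact even_iff_two_dvd.2 (Nat.dvd_of_mul_dvd_mul_left two_pos h4)
  exact hasMDSSelfDualCode_of_card_eq_sq hF hrh
    (by rw [Nat.mul_div_cancel' (Nat.gcd_dvd_left _ _), hF, hq1])
    (by rw [Nat.mul_div_cancel' (Nat.gcd_dvd_right _ _), hF, hq2])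
    ((pow_dvd_pow 2 hl).trans hgcd) hodd hd₁ hd₂ hs1 hs2 ht2 heven hn1
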